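/- If the graph sequence {𝔾(t)} of the column stochastic matrix sequence {W(t)} is uniformly strongly connected, then there exist a constant c > 0, a constant μ ∈ [0,1), and a sequence {v(t)} of stochastic vectors in ℝ^n with all entries positive, such that for all i, j ∈ {1,…,n} and all t ≥ τ ≥ 0: | [W(t) W(t−1) ⋯ W(τ)]_{ij} − v_i(t) | ≤ c μ^{t−τ}. In particular, for each fixed τ the product W(t)⋯W(τ+1)W(τ) converges exponentially fast, as t → ∞, to the set of matrices of the form v𝟙ᵀ with v a positive stochastic vector. -/

import Mathlib

open Filter Finset

/-- `matProd M τ k = M (τ+k-1) * ⋯ * M (τ+1) * M τ` (the product of `k` factors),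
i.e. the state-transition matrix `Φ_M (τ+k, τ)`. -/
def matProd {n : ℕ} (M : ℕ → Matrix (Fin n) (Fin n) ℝ) (τ : ℕ) : ℕ → Matrix (Fin n) (Fin n) ℝ
  | 0 => 1
  | k + 1 => M (τ + k) * matProd M τ k

/-!
A column stochastic matrix whose entries are all at least `δ` contracts the `ℓ¹` norm on vectors of
sum zero by the factor `1 - nδ`. Over `n` consecutive windows of length `L`, the positive diagonals
let the support of each column grow until it is everything, so every product of `nL` factors is
entrywise at least `β ^ (nL)`. Hence any two stochastic vectors driven by the same products approach
each other geometrically. Comparing a basis vector started at time `τ` with the trajectory `v` of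
the uniform vector started at time `0` gives the bound on the columns of the products.
-/

section BackwardProd

variable {M : Type*} [Monoid M]

/-- The product `a (τ + k - 1) * ⋯ * a (τ + 1) * a τ` of `k` consecutive terms of a sequence, later
terms on the left; this is `matProd` in an arbitrary monoid. -/
def backwardProd (a : ℕ → M) (τ : ℕ) : ℕ → M
  | 0 => 1
  | k + 1 => a (τ + k) * backwardProd a τ k

theorem matProd_eq_backwardProd {n : ℕ} (W : ℕ → Matrix (Fin n) (Fin n) ℝ) (τ k : ℕ) :
    matProd W τ k = backwardProd W τ k := by
  induction k with
  | zero => rfl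
  | succ k ih => rw [matProd, backwardProd, ih]

theorem backwardProd_add (a : ℕ → M) (τ k l : ℕ) :
    backwardProd a τ (k + l) = backwardProd a (τ + k) l * backwardProd a τ k := by
  induction l with
  | zero => simp [backwardProd]
  | succ l ih => rw [← add_assoc, backwardProd, backwardProd, ih, mul_assoc, add_assoc]

theorem backwardProd_mul (a : ℕ → M) (τ m L : ℕ) :
    backwardProd a τ (m * L) =
      backwardProd (fun s => backwardProd a (τ + s * L) L) 0 m := by
  induction m with
  | zero => simp [backwardProd]
  | succ m ih => rw [add_mul, one_mul, backwardProd_add, ih, backwardProd, zero_add]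

theorem backwardProd_mem {S : Submonoid M} {a : ℕ → M} (ha : ∀ t, a t ∈ S) (τ k : ℕ) :
    backwardProd a τ k ∈ S := by
  induction k with
  | zero => exact S.one_mem
  | succ k ih => exact S.mul_mem (ha _) ih

end BackwardProd

section NonnegativeMatrices

open scoped Matrix

variable {R l m n : Type*} [Semiring R] [Fintype m]

theorem mulVec_apply_pos [PartialOrder R] [IsStrictOrderedRing R] {A : Matrix l m R} {x : m → R}
    {i : l} {j : m} (hA : ∀ i j, 0 ≤ A i j) (hx : ∀ j, 0 ≤ x j) (hij : 0 < A i j) (hj : 0 < x j) :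
    0 < (A *ᵥ x) i :=
  sum_pos' (fun k _ => mul_nonneg (hA i k) (hx k)) ⟨j, mem_univ j, mul_pos hij hj⟩

theorem mul_apply_pos [PartialOrder R] [IsStrictOrderedRing R] {A : Matrix l m R}
    {B : Matrix m n R} {i : l} {j : m} {k : n} (hA : ∀ i j, 0 ≤ A i j) (hB : ∀ j k, 0 ≤ B j k)
    (hij : 0 < A i j) (hjk : 0 < B j k) : 0 < (A * B) i k :=
  mulVec_apply_pos hA (fun j => hB j k) hij hjk

theorem mul_le_mul_apply_of_pos [LinearOrder R] [IsStrictOrderedRing R] {A : Matrix l m R}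
    {B : Matrix m n R} {a b : R} {i : l} {k : n} (hA : ∀ i j, 0 ≤ A i j) (hB : ∀ j k, 0 ≤ B j k)
    (hb : 0 ≤ b) (hAa : ∀ i j, 0 < A i j → a ≤ A i j) (hBb : ∀ j k, 0 < B j k → b ≤ B j k)
    (hik : 0 < (A * B) i k) : a * b ≤ (A * B) i k := by
  have hterm (j : m) : 0 ≤ A i j * B j k := mul_nonneg (hA i j) (hB j k)
  rw [Matrix.mul_apply] at hik ⊢
  obtain ⟨j, -, hj⟩ := (sum_pos_iff_of_nonneg fun j _ => hterm j).1 hik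
  have hij : 0 < A i j := pos_of_mul_pos_left hj (hB j k)
  have hjk : 0 < B j k := pos_of_mul_pos_right hj (hA i j)
  calc
    a * b ≤ A i j * B j k := mul_le_mul (hAa i j hij) (hBb j k hjk) hb (hA i j)
    _ ≤ ∑ j, A i j * B j k := single_le_sum (fun j _ => hterm j) (mem_univ j)

variable [DecidableEq m]

theorem backwardProd_apply_nonneg [PartialOrder R] [IsOrderedRing R] {W : ℕ → Matrix m m R}
    (hW : ∀ t i j, 0 ≤ W t i j) (τ k : ℕ) (i j : m) : 0 ≤ backwardProd W τ k i j := by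
  induction k generalizing i j with
  | zero => rw [backwardProd, Matrix.one_apply]; split_ifs <;> simp
  | succ k ih => exact sum_nonneg fun l _ => mul_nonneg (hW _ i l) (ih l j)

theorem pow_le_backwardProd_apply [LinearOrder R] [IsStrictOrderedRing R]
    {W : ℕ → Matrix m m R} {β : R} (hβ : 0 ≤ β) (hW : ∀ t i j, 0 ≤ W t i j)
    (hWβ : ∀ t i j, 0 < W t i j → β ≤ W t i j) (τ k : ℕ) (i j : m)
    (hij : 0 < backwardProd W τ k i j) : β ^ k ≤ backwardProd W τ k i j := by
  induction k generalizing i j with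
  | zero =>
    obtain rfl : i = j := by
      by_contra hne
      simp [backwardProd, Matrix.one_apply_ne hne] at hij
    simp [backwardProd]
  | succ k ih =>
    rw [pow_succ']
    exact mul_le_mul_apply_of_pos (hW _) (backwardProd_apply_nonneg hW τ k) (pow_nonneg hβ k)
      (hWβ _) ih hij

variable (R m) in
/-- The monoid of entrywise nonnegative square matrices with positive diagonal: multiplying by one
of them never shrinks the support of a nonnegative vector. -/
def nonnegPosDiag [PartialOrder R] [IsStrictOrderedRing R] : Submonoid (Matrix m m R) where
  carrier := {A | (∀ i j, 0 ≤ A i j) ∧ ∀ i, 0 < A i i}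
  one_mem' := ⟨fun i j => by rw [Matrix.one_apply]; split_ifs <;> simp, fun i => by simp⟩
  mul_mem' hA hB :=
    ⟨fun i j => sum_nonneg fun k _ => mul_nonneg (hA.1 i k) (hB.1 k j),
      fun i => mul_apply_pos hA.1 hB.1 (hA.2 i) (hB.2 i)⟩

end NonnegativeMatrices

section Connectivity

variable {R ι : Type*} [Fintype ι]

theorem eq_univ_of_monotone_of_stable {S : ℕ → Finset ι} (hmono : Monotone S)
    (hstable : ∀ m, S m = S (m + 1) → S m = univ) : S (Fintype.card ι) = univ := by
  have huniv (m : ℕ) (h : #(S m) = #(S (m + 1))) : S m = univ :=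
    hstable m (eq_of_subset_of_card_le (hmono m.le_succ) h.ge)
  have hcard : #(S (Fintype.card ι + 1)) = #(S (Fintype.card ι)) := by
    refine Nat.stabilises_of_monotone (card_mono.comp hmono) (fun m => card_le_univ (S m))
      (fun m h => ?_) (Nat.le_succ _)
    have htop (l : ℕ) (hl : m ≤ l) : S l = univ := univ_subset_iff.1 (huniv m h ▸ hmono hl)
    simp only [Function.comp_apply, htop (m + 1) (by lia), htop (m + 2) (by lia)]
  exact huniv _ hcard.symm

variable [DecidableEq ι] [Semiring R] [PartialOrder R]

theorem backwardProd_card_pos [IsStrictOrderedRing R] {P : ℕ → Matrix ι ι R}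
    (hP : ∀ t, P t ∈ nonnegPosDiag R ι)
    (hconn : ∀ t i j, Relation.TransGen (fun u v => 0 < P t v u) i j) (τ : ℕ) (i j : ι) :
    0 < backwardProd P τ (Fintype.card ι) i j := by
  classical
  have hnonneg (k : ℕ) := (backwardProd_mem hP τ k).1
  let S (k : ℕ) : Finset ι := {u | 0 < backwardProd P τ k u j}
  have hmem (k : ℕ) (u : ι) : u ∈ S k ↔ 0 < backwardProd P τ k u j := by simp [S]
  have harc (k : ℕ) (u v : ι) (huv : 0 < P (τ + k) v u) (hu : u ∈ S k) : v ∈ S (k + 1) :=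
    (hmem _ v).2 (mul_apply_pos (hP _).1 (hnonneg k) huv ((hmem k u).1 hu))
  have hmono : Monotone S := monotone_nat_of_le_succ fun k u => harc k u u ((hP _).2 u)
  have hstable (k : ℕ) (hk : S k = S (k + 1)) : S k = univ := by
    refine eq_univ_of_forall fun v => ?_
    induction hconn (τ + k) j v with
    | single h => exact hk ▸ harc k _ _ h ((hmem k j).2 ((backwardProd_mem hP τ k).2 j))
    | tail _ h ih => exact hk ▸ harc k _ _ h ih
  exact (hmem _ i).1 (eq_univ_of_monotone_of_stable hmono hstable ▸ mem_univ i)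

/-- The arc relation `u → v` of the union graph `𝔾(t) ∪ ⋯ ∪ 𝔾(t + L - 1)`: the source of an arc is
a column index and its target a row index. -/
def UnionArc (W : ℕ → Matrix ι ι R) (t L : ℕ) (u v : ι) : Prop :=
  ∃ k ∈ Ico t (t + L), 0 < W k v u

/-- The graph sequence of `W` is uniformly strongly connected with window length `L`. Strong
connectivity is stated with nonempty paths, which for positive diagonals and `0 < L` is no
restriction. -/
def UniformlyStronglyConnected (W : ℕ → Matrix ι ι R) (L : ℕ) : Prop :=
  ∀ t i j, Relation.TransGen (UnionArc W t L) i j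

theorem UnionArc.backwardProd_pos [IsStrictOrderedRing R] {W : ℕ → Matrix ι ι R}
    (hW : ∀ t, W t ∈ nonnegPosDiag R ι) {t L : ℕ} {u v : ι} (h : UnionArc W t L u v) :
    0 < backwardProd W t L v u := by
  obtain ⟨k, hk, huv⟩ := h
  obtain ⟨htk, hkL⟩ := mem_Ico.1 hk
  obtain ⟨d, rfl⟩ := Nat.exists_eq_add_of_le htk
  obtain ⟨e, rfl⟩ : ∃ e, L = d + 1 + e := Nat.exists_eq_add_of_le (by lia)
  have hprod (s r : ℕ) := backwardProd_mem hW s r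
  have hupto : 0 < backwardProd W t (d + 1) v u :=
    mul_apply_pos (hW _).1 (hprod t d).1 huv ((hprod t d).2 u)
  rw [backwardProd_add]
  exact mul_apply_pos (hprod _ e).1 (hprod t _).1 ((hprod _ e).2 v) hupto

theorem UniformlyStronglyConnected.backwardProd_pos [IsStrictOrderedRing R]
    {W : ℕ → Matrix ι ι R} {L : ℕ} (hconn : UniformlyStronglyConnected W L)
    (hW : ∀ t, W t ∈ nonnegPosDiag R ι) (τ : ℕ) (i j : ι) :
    0 < backwardProd W τ (Fintype.card ι * L) i j := by
  rw [backwardProd_mul]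
  exact backwardProd_card_pos (fun s => backwardProd_mem hW (τ + s * L) L)
    (fun s i j => Relation.TransGen.mono (fun _ _ => UnionArc.backwardProd_pos hW) i j
      (hconn (τ + s * L) i j)) 0 i j

end Connectivity

section Contraction

open scoped Matrix

theorem mulVec_mem_stdSimplex {R ι : Type*} [Fintype ι] [DecidableEq ι] [Semiring R]
    [PartialOrder R] [IsOrderedRing R] {A : Matrix ι ι R} (hA : A ∈ Matrix.colStochastic R ι)
    {x : ι → R} (hx : x ∈ stdSimplex R ι) : A *ᵥ x ∈ stdSimplex R ι :=
  ⟨Matrix.nonneg_mulVec_of_mem_colStochastic hA hx.1,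
    (Matrix.sum_mulVec_of_mem_colStochastic hA).trans hx.2⟩

theorem sum_abs_sub_le_two_of_mem_stdSimplex {R ι : Type*} [Fintype ι] [CommRing R]
    [LinearOrder R] [IsStrictOrderedRing R] {x y : ι → R} (hx : x ∈ stdSimplex R ι)
    (hy : y ∈ stdSimplex R ι) : ∑ i, |(x - y) i| ≤ 2 :=
  calc
    ∑ i, |(x - y) i| ≤ ∑ i, (x i + y i) := sum_le_sum fun i _ =>
      abs_sub_le_of_nonneg_of_le (hx.1 i) (by linarith [hy.1 i]) (hy.1 i) (by linarith [hx.1 i])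
    _ = 2 := by rw [sum_add_distrib, hx.2, hy.2]; norm_num

theorem card_mul_le_one_of_sum_col_eq_one {R ι κ : Type*} [Nonempty ι] [Fintype κ] [Semiring R]
    [PartialOrder R] [IsOrderedRing R] {A : Matrix κ ι R} {δ : R} (hcol : ∀ j, ∑ i, A i j = 1)
    (hδ : ∀ i j, δ ≤ A i j) : Fintype.card κ * δ ≤ 1 := by
  obtain ⟨j⟩ := ‹Nonempty ι›
  rw [← hcol j, ← nsmul_eq_mul]
  exact card_nsmul_le_sum univ (A · j) δ fun i _ => hδ i j

variable {R ι κ : Type*} [Fintype ι] [Fintype κ] [CommRing R] [LinearOrder R]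
  [IsStrictOrderedRing R]

theorem sum_abs_mulVec_le {A : Matrix κ ι R} {δ : R} {z : ι → R} (hcol : ∀ j, ∑ i, A i j = 1)
    (hδ : ∀ i j, δ ≤ A i j) (hz : ∑ j, z j = 0) :
    ∑ i, |(A *ᵥ z) i| ≤ (1 - Fintype.card κ * δ) * ∑ j, |z j| := by
  -- Since `z` sums to zero, `A` acts on it as the nonnegative matrix with entries `A i j - δ`.
  have hshift (i : κ) : (A *ᵥ z) i = ∑ j, (A i j - δ) * z j := by
    simp only [Matrix.mulVec, dotProduct, sub_mul, sum_sub_distrib, ← mul_sum, hz, mul_zero,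
      sub_zero]
  calc
    ∑ i, |(A *ᵥ z) i| ≤ ∑ i, ∑ j, (A i j - δ) * |z j| := by
      refine sum_le_sum fun i _ => hshift i ▸ (abs_sum_le_sum_abs _ _).trans_eq ?_
      exact sum_congr rfl fun j _ => by rw [abs_mul, abs_of_nonneg (sub_nonneg.2 (hδ i j))]
    _ = ∑ j, (∑ i, (A i j - δ)) * |z j| := by simp only [sum_comm (s := univ (α := κ)), sum_mul]
    _ = (1 - Fintype.card κ * δ) * ∑ j, |z j| := by
      simp only [sum_sub_distrib, hcol, sum_const, card_univ, nsmul_eq_mul, ← mul_sum]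

variable [DecidableEq ι]

theorem sum_abs_backwardProd_mulVec_le [Nonempty ι] {W : ℕ → Matrix ι ι R}
    (hW : ∀ t, W t ∈ Matrix.colStochastic R ι) {B : ℕ} {δ : R}
    (hδ : ∀ τ i j, δ ≤ backwardProd W τ B i j) {z : ι → R} (hz : ∑ i, z i = 0) (τ k : ℕ) :
    ∑ i, |(backwardProd W τ k *ᵥ z) i| ≤
      (1 - Fintype.card ι * δ) ^ (k / B) * ∑ i, |z i| := by
  have hprod (s r : ℕ) := backwardProd_mem hW s r
  have hcol (s r : ℕ) := Matrix.sum_col_of_mem_colStochastic (hprod s r)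
  have hsum (s r : ℕ) : ∑ i, (backwardProd W s r *ᵥ z) i = 0 :=
    (Matrix.sum_mulVec_of_mem_colStochastic (hprod s r)).trans hz
  have hfactor : 0 ≤ 1 - Fintype.card ι * δ :=
    sub_nonneg.2 (card_mul_le_one_of_sum_col_eq_one (hcol 0 B) (hδ 0))
  have hblocks (q : ℕ) : ∑ i, |(backwardProd W τ (B * q) *ᵥ z) i| ≤
      (1 - Fintype.card ι * δ) ^ q * ∑ i, |z i| := by
    induction q with
    | zero => simp [backwardProd]
    | succ q ih =>
      rw [mul_add_one, backwardProd_add, ← Matrix.mulVec_mulVec, pow_succ', mul_assoc]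
      exact (sum_abs_mulVec_le (hcol _ B) (hδ _) (hsum τ _)).trans
        (mul_le_mul_of_nonneg_left ih hfactor)
  have hremainder (s r : ℕ) :
      ∑ i, |(backwardProd W τ (s + r) *ᵥ z) i| ≤ ∑ i, |(backwardProd W τ s *ᵥ z) i| := by
    rw [backwardProd_add, ← Matrix.mulVec_mulVec]
    simpa using sum_abs_mulVec_le (hcol (τ + s) r) (hprod (τ + s) r).1 (hsum τ s)
  calc
    ∑ i, |(backwardProd W τ k *ᵥ z) i| =
        ∑ i, |(backwardProd W τ (B * (k / B) + k % B) *ᵥ z) i| := by rw [Nat.div_add_mod]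
    _ ≤ ∑ i, |(backwardProd W τ (B * (k / B)) *ᵥ z) i| := hremainder _ _
    _ ≤ (1 - Fintype.card ι * δ) ^ (k / B) * ∑ i, |z i| := hblocks _

end Contraction

theorem exists_pow_div_le_geometric {ρ : ℝ} (hρ₀ : 0 ≤ ρ) (hρ₁ : ρ < 1) {B : ℕ} (hB : 0 < B) :
    ∃ c : ℝ, 0 < c ∧ ∃ μ : ℝ, 0 ≤ μ ∧ μ < 1 ∧ ∀ k : ℕ, ρ ^ (k / B) ≤ c * μ ^ k := by
  -- `ρ` may vanish, so take the `B`-th root of a positive bound for it instead.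
  obtain ⟨σ, hρσ, hσ₁⟩ := exists_between hρ₁
  have hσ₀ : 0 < σ := hρ₀.trans_lt hρσ
  let μ : ℝ := σ ^ (B : ℝ)⁻¹
  have hμ₀ : 0 ≤ μ := Real.rpow_nonneg hσ₀.le _
  have hμB : μ ^ B = σ := Real.rpow_inv_natCast_pow hσ₀.le hB.ne'
  have hμ₁ : μ < 1 := Real.rpow_lt_one hσ₀.le hσ₁ (by positivity)
  refine ⟨σ⁻¹, inv_pos.2 hσ₀, μ, hμ₀, hμ₁, fun k => ?_⟩
  rw [inv_mul_eq_div, le_div_iff₀ hσ₀]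
  calc
    ρ ^ (k / B) * σ ≤ σ ^ (k / B) * σ := by gcongr
    _ = μ ^ (B * (k / B + 1)) := by rw [← pow_succ, pow_mul, hμB]
    _ ≤ μ ^ k := pow_le_pow_of_le_one hμ₀ hμ₁.le (Nat.lt_mul_div_succ k hB).le

section Ergodicity

open scoped Matrix

variable {ι : Type*} [Fintype ι] [DecidableEq ι] [Nonempty ι] {W : ℕ → Matrix ι ι ℝ}

theorem exists_geometric_merging (hW : ∀ t, W t ∈ Matrix.colStochastic ℝ ι) {B : ℕ} (hB : 0 < B)
    {δ : ℝ} (hδ₀ : 0 < δ) (hδ : ∀ τ i j, δ ≤ backwardProd W τ B i j) :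
    ∃ c : ℝ, 0 < c ∧ ∃ μ : ℝ, 0 ≤ μ ∧ μ < 1 ∧
      ∀ τ k : ℕ, ∀ x ∈ stdSimplex ℝ ι, ∀ y ∈ stdSimplex ℝ ι,
        ∑ i, |(backwardProd W τ k *ᵥ x) i - (backwardProd W τ k *ᵥ y) i| ≤ c * μ ^ k := by
  let ρ : ℝ := 1 - Fintype.card ι * δ
  have hρ₀ : 0 ≤ ρ := sub_nonneg.2 (card_mul_le_one_of_sum_col_eq_one
    (Matrix.sum_col_of_mem_colStochastic (backwardProd_mem hW 0 B)) (hδ 0))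
  have hρ₁ : ρ < 1 := sub_lt_self 1 (by positivity)
  obtain ⟨c, hc, μ, hμ₀, hμ₁, hgeom⟩ := exists_pow_div_le_geometric hρ₀ hρ₁ hB
  refine ⟨c * 2, by positivity, μ, hμ₀, hμ₁, fun τ k x hx y hy => ?_⟩
  have hzero : ∑ i, (x - y) i = 0 := by simp [hx.2, hy.2]
  calc
    ∑ i, |(backwardProd W τ k *ᵥ x) i - (backwardProd W τ k *ᵥ y) i| =
        ∑ i, |(backwardProd W τ k *ᵥ (x - y)) i| := by simp only [Matrix.mulVec_sub, Pi.sub_apply]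
    _ ≤ ρ ^ (k / B) * ∑ i, |(x - y) i| := sum_abs_backwardProd_mulVec_le hW hδ hzero τ k
    _ ≤ c * μ ^ k * 2 := mul_le_mul (hgeom k) (sum_abs_sub_le_two_of_mem_stdSimplex hx hy)
      (sum_nonneg fun i _ => abs_nonneg _) (by positivity)
    _ = c * 2 * μ ^ k := by ring

theorem stmt_8_general (hW : ∀ t, W t ∈ Matrix.colStochastic ℝ ι) (hdiag : ∀ t i, 0 < W t i i)
    {β : ℝ} (hβ : 0 < β) (hWβ : ∀ t i j, 0 < W t i j → β ≤ W t i j)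
    {L : ℕ} (hL : 0 < L) (hconn : UniformlyStronglyConnected W L) :
    ∃ c : ℝ, 0 < c ∧ ∃ μ : ℝ, 0 ≤ μ ∧ μ < 1 ∧
      ∃ v : ℕ → ι → ℝ,
        (∀ t, (∀ i, 0 < v t i) ∧ ∑ i, v t i = 1) ∧
        ∀ τ k : ℕ, ∀ i j : ι, |backwardProd W τ (k + 1) i j - v (τ + k) i| ≤ c * μ ^ k := by
  have hpos (t : ℕ) : W t ∈ nonnegPosDiag ℝ ι := ⟨(hW t).1, hdiag t⟩
  obtain ⟨c, hc, μ, hμ₀, hμ₁, hmerge⟩ := exists_geometric_merging hW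
    (Nat.mul_pos Fintype.card_pos hL) (pow_pos hβ _) fun τ i j =>
      pow_le_backwardProd_apply hβ.le (fun t => (hW t).1) hWβ τ _ i j
        (hconn.backwardProd_pos hpos τ i j)
  let u : ι → ℝ := fun _ => (Fintype.card ι : ℝ)⁻¹
  have hu₀ (i : ι) : 0 < u i := by positivity
  have hu : u ∈ stdSimplex ℝ ι := ⟨fun i => (hu₀ i).le, by simp [u]⟩
  have hstoch (t : ℕ) : backwardProd W 0 t *ᵥ u ∈ stdSimplex ℝ ι :=
    mulVec_mem_stdSimplex (backwardProd_mem hW 0 t) hu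
  let v (t : ℕ) : ι → ℝ := backwardProd W 0 (t + 1) *ᵥ u
  have hv_pos (t : ℕ) (i : ι) : 0 < v t i :=
    have hprod := backwardProd_mem hpos 0 (t + 1)
    mulVec_apply_pos hprod.1 hu.1 (hprod.2 i) (hu₀ i)
  have hv_restart (τ k : ℕ) :
      v (τ + k) = backwardProd W τ (k + 1) *ᵥ (backwardProd W 0 τ *ᵥ u) := by
    simp only [v, add_assoc, backwardProd_add W 0 τ, zero_add, Matrix.mulVec_mulVec]
  refine ⟨c, hc, μ, hμ₀, hμ₁, v, fun t => ⟨hv_pos t, (hstoch (t + 1)).2⟩, fun τ k i j => ?_⟩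
  have hcolumn := hmerge τ (k + 1) _ (single_mem_stdSimplex ℝ j) _ (hstoch τ)
  simp only [← hv_restart, Matrix.mulVec_single_one, Matrix.col_apply] at hcolumn
  calc
    |backwardProd W τ (k + 1) i j - v (τ + k) i| ≤
        ∑ l, |backwardProd W τ (k + 1) l j - v (τ + k) l| :=
      single_le_sum (f := fun l => |backwardProd W τ (k + 1) l j - v (τ + k) l|)
        (fun l _ => abs_nonneg _) (mem_univ i)
    _ ≤ c * μ ^ (k + 1) := hcolumn
    _ ≤ c * μ ^ k := mul_le_mul_of_nonneg_left (pow_le_pow_of_le_one hμ₀ hμ₁.le k.le_succ) hc.le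

end Ergodicity

theorem stmt_8
    (n : ℕ) (hn : 0 < n)
    (W : ℕ → Matrix (Fin n) (Fin n) ℝ)
    (hWnonneg : ∀ t i j, 0 ≤ W t i j)
    (hWcol : ∀ t j, ∑ i, W t i j = 1)
    (hWdiag : ∀ t i, 0 < W t i i)
    (β : ℝ) (hβ : 0 < β)
    (hWβ : ∀ t i j, 0 < W t i j → β ≤ W t i j)
    (L : ℕ) (hL : 0 < L)
    (hUSC : ∀ t : ℕ, ∀ i j : Fin n,
      Relation.TransGen (fun u v : Fin n => ∃ k ∈ Finset.Ico t (t + L), 0 < W k v u) i j)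
    :
    ∃ c : ℝ, 0 < c ∧ ∃ μ : ℝ, 0 ≤ μ ∧ μ < 1 ∧
      ∃ v : ℕ → Fin n → ℝ,
        (∀ t, (∀ i, 0 < v t i) ∧ ∑ i, v t i = 1) ∧
        ∀ τ k : ℕ, ∀ i j : Fin n,
          |matProd W τ (k + 1) i j - v (τ + k) i| ≤ c * μ ^ k := by
  have : NeZero n := ⟨hn.ne'⟩
  simpa only [matProd_eq_backwardProd] using stmt_8_general
    (fun t => Matrix.mem_colStochastic_iff_sum.2 ⟨hWnonneg t, hWcol t⟩) hWdiag hβ hWβ hL hUSC
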